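/- arXiv:1810.06039 — 2 statements merged into one kernel-verified Lean document; each statement's English description precedes it below -/
import Mathlib

section
/- Let p ≥ 1 and α ≥ 1/p. Then there exists a constant c = c(α,p) such that for every bounded domain A ⊂ ℝ^k of positive Lebesgue measure, every u ∈ L^{αp}(A;ℝ^N) and every a ∈ ℝ^N one has |((u)_A)^⟨α⟩ − a^⟨α⟩|^p ≤ c ⨍_A |u^⟨α⟩ − a^⟨α⟩|^p dx. -/
open MeasureTheory Set
open scoped ENNReal

noncomputable section

abbrev Vec (N : ℕ) := EuclideanSpace ℝ (Fin N)

/-- The power `w^⟨α⟩ := |w|^{α−1} w` of a vector (interpreted as `0` when `w = 0`). -/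
def pw {N : ℕ} (α : ℝ) (w : Vec N) : Vec N := ‖w‖ ^ (α - 1) • w

lemma norm_pw {N : ℕ} {α : ℝ} (hα : 0 < α) (w : Vec N) : ‖pw α w‖ = ‖w‖ ^ α := by
  rcases eq_or_ne w 0 with rfl | hw
  · simp [pw, Real.zero_rpow hα.ne']
  · have h : 0 < ‖w‖ := norm_pos_iff.2 hw
    rw [pw, norm_smul, Real.norm_of_nonneg (by positivity), Real.rpow_sub_one h.ne']
    field_simp

lemma pw_inv_pw {N : ℕ} {α : ℝ} (hα : 0 < α) (w : Vec N) : pw α⁻¹ (pw α w) = w := by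
  rcases eq_or_ne w 0 with rfl | hw
  · simp [pw]
  · have h : 0 < ‖w‖ := norm_pos_iff.2 hw
    rw [pw, norm_pw hα, pw, smul_smul, ← Real.rpow_mul h.le, ← Real.rpow_add h]
    have : α * (α⁻¹ - 1) + (α - 1) = 0 := by field_simp; ring
    rw [this, Real.rpow_zero, one_smul]

lemma one_sub_rpow_le {α x : ℝ} (hα : 0 < α) (hx : 0 ≤ x) (hx1 : x ≤ 1) :
    1 - x ^ α ≤ (1 + α) * (1 - x) := by
  rcases le_total 1 α with h | h
  · have := one_add_mul_self_le_rpow_one_add (s := x - 1) (by linarith) h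
    rw [show 1 + (x - 1) = x by ring] at this
    nlinarith
  · have := Real.rpow_le_rpow_of_exponent_ge' hx hx1 hα.le h
    rw [Real.rpow_one] at this
    nlinarith

lemma abs_rpow_sub_rpow_mul_le {α s t : ℝ} (hα : 0 < α) (hs : 0 ≤ s) (hst : s ≤ t) :
    |t ^ (α - 1) - s ^ (α - 1)| * s ≤ (2 + α) * (t ^ (α - 1) * (t - s)) := by
  rcases hs.eq_or_lt with rfl | hs
  · simp only [mul_zero, sub_zero]
    positivity
  have ht : 0 < t := hs.trans_le hst
  set x := s / t with hx
  have hx0 : 0 < x := by positivity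
  have hx1 : x ≤ 1 := (div_le_one ht).2 hst
  have hsx : s = t * x := by rw [hx]; field_simp
  have hxα : x ^ (α - 1) * x = x ^ α := by
    rw [Real.rpow_sub_one hx0.ne']; field_simp
  have h1 := one_sub_rpow_le hα hx0.le hx1
  have h2 : x ^ α ≤ 1 := Real.rpow_le_one hx0.le hx1 hα.le
  have key : |x - x ^ α| ≤ (2 + α) * (1 - x) := by
    rw [abs_le]; constructor <;> nlinarith
  have hT : 0 < t ^ (α - 1) := by positivity
  rw [hsx, Real.mul_rpow ht.le hx0.le]
  calc |t ^ (α - 1) - t ^ (α - 1) * x ^ (α - 1)| * (t * x)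
      = t ^ (α - 1) * t * |x - x ^ α| := by
        rw [← hxα, show t ^ (α - 1) - t ^ (α - 1) * x ^ (α - 1)
          = t ^ (α - 1) * (1 - x ^ (α - 1)) by ring,
          show x - x ^ (α - 1) * x = (1 - x ^ (α - 1)) * x by ring,
          abs_mul, abs_mul, abs_of_pos hT, abs_of_pos hx0]
        ring
    _ ≤ t ^ (α - 1) * t * ((2 + α) * (1 - x)) := by gcongr
    _ = _ := by ring

lemma norm_pw_sub_pw_le {N : ℕ} {α : ℝ} (hα : 0 < α) (a b : Vec N) :
    ‖pw α b - pw α a‖ ≤ (3 + α) * (max ‖a‖ ‖b‖ ^ (α - 1) * ‖b - a‖) := by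
  wlog hab : ‖a‖ ≤ ‖b‖ generalizing a b
  · rw [norm_sub_rev, max_comm, norm_sub_rev b a]
    exact this b a (le_of_not_ge hab)
  rw [max_eq_right hab]
  have h := abs_rpow_sub_rpow_mul_le hα (norm_nonneg a) hab
  have h' : ‖b‖ - ‖a‖ ≤ ‖b - a‖ := norm_sub_norm_le b a
  have hT : 0 ≤ ‖b‖ ^ (α - 1) := by positivity
  calc ‖pw α b - pw α a‖
      = ‖‖b‖ ^ (α - 1) • (b - a) + (‖b‖ ^ (α - 1) - ‖a‖ ^ (α - 1)) • a‖ := by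
        rw [pw, pw]; congr 1; module
    _ ≤ ‖b‖ ^ (α - 1) * ‖b - a‖ + |‖b‖ ^ (α - 1) - ‖a‖ ^ (α - 1)| * ‖a‖ := by
        refine (norm_add_le _ _).trans_eq ?_
        rw [norm_smul, norm_smul, Real.norm_of_nonneg hT, Real.norm_eq_abs]
    _ ≤ ‖b‖ ^ (α - 1) * ‖b - a‖ + (2 + α) * (‖b‖ ^ (α - 1) * ‖b - a‖) := by
        refine add_le_add_right (h.trans ?_) _
        gcongr
    _ = _ := by ring

lemma le_norm_pw_sub_pw {N : ℕ} {α : ℝ} (hα : 0 < α) (a b : Vec N) :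
    max ‖a‖ ‖b‖ ^ (α - 1) * ‖b - a‖ ≤ (3 + α⁻¹) * ‖pw α b - pw α a‖ := by
  rcases (le_max_of_le_left (norm_nonneg a) : 0 ≤ max ‖a‖ ‖b‖).eq_or_lt with h0 | h0
  · have ha : ‖a‖ ≤ 0 := h0 ▸ le_max_left _ _
    have hb : ‖b‖ ≤ 0 := h0 ▸ le_max_right _ _
    simp [norm_le_zero_iff.1 ha, norm_le_zero_iff.1 hb]
  have h := norm_pw_sub_pw_le (inv_pos.2 hα) (pw α a) (pw α b)
  have hmax : max (‖a‖ ^ α) (‖b‖ ^ α) = max ‖a‖ ‖b‖ ^ α :=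
    ((Real.monotoneOn_rpow_Ici_of_exponent_nonneg hα.le).map_max
      (norm_nonneg a) (norm_nonneg b)).symm
  rw [pw_inv_pw hα, pw_inv_pw hα, norm_pw hα, norm_pw hα, hmax, ← Real.rpow_mul h0.le] at h
  calc max ‖a‖ ‖b‖ ^ (α - 1) * ‖b - a‖
      ≤ max ‖a‖ ‖b‖ ^ (α - 1) * ((3 + α⁻¹) *
        (max ‖a‖ ‖b‖ ^ (α * (α⁻¹ - 1)) * ‖pw α b - pw α a‖)) := by gcongr
    _ = (max ‖a‖ ‖b‖ ^ (α - 1) * max ‖a‖ ‖b‖ ^ (α * (α⁻¹ - 1))) *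
        ((3 + α⁻¹) * ‖pw α b - pw α a‖) := by ring
    _ = _ := by
        rw [← Real.rpow_add h0, show α - 1 + α * (α⁻¹ - 1) = 0 by field_simp; ring,
          Real.rpow_zero, one_mul]

/-- A quantitative form of the almost monotonicity of `t ↦ (s + t) ^ ((α - 1) * p) * t ^ (p - 1)`
for `α * p ≥ 1`. -/
lemma exists_rpow_comparison {p α : ℝ} (hp : 1 ≤ p) (hαp : 1 ≤ α * p) :
    ∃ C : ℝ, 0 < C ∧ ∀ r t P Q : ℝ, 0 < r → r ≤ 2 * t → 0 < P → 0 < Q → P ≤ 5 * Q →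
      r * Q ≤ 4 * t * P → (P ^ (α - 1) * r) ^ p * t ≤ C * (r * (Q ^ (α - 1) * t) ^ p) := by
  have hp0 : 0 ≤ p := by linarith
  rcases le_total 1 α with h1 | h1
  · refine ⟨(5 ^ (α - 1)) ^ p * 2 ^ (p - 1), by positivity, ?_⟩
    intro r t P Q hr hrt hP hQ hPQ _
    have ht : 0 < t := by linarith
    have hsplit : ∀ x : ℝ, 0 < x → x ^ p = x ^ (p - 1) * x := fun x hx => by
      rw [Real.rpow_sub_one hx.ne']; field_simp
    calc (P ^ (α - 1) * r) ^ p * t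
        = (P ^ (α - 1)) ^ p * r ^ (p - 1) * (r * t) := by
          rw [Real.mul_rpow (by positivity) hr.le, hsplit r hr]; ring
      _ ≤ ((5 * Q) ^ (α - 1)) ^ p * (2 * t) ^ (p - 1) * (r * t) := by
          have : 0 ≤ α - 1 := by linarith
          have : 0 ≤ p - 1 := by linarith
          gcongr
      _ = _ := by
          rw [Real.mul_rpow (by positivity) hQ.le, Real.mul_rpow (by positivity) (by positivity),
            Real.mul_rpow (by positivity) ht.le, Real.mul_rpow (by positivity) ht.le, hsplit t ht]
          ring
  · refine ⟨(4 ^ (1 - α)) ^ p * 2 ^ (α * p - 1), by positivity, ?_⟩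
    intro r t P Q hr hrt hP hQ _ hrQ
    have ht : 0 < t := by linarith
    have hsplit : ∀ x R : ℝ, 0 < x → 0 < R →
        (R ^ (α - 1) * x) ^ p = ((x / R) ^ (1 - α)) ^ p * x ^ (α * p - 1) * x := by
      intro x R hx hR
      have e1 : R ^ (α - 1) * x = (x / R) ^ (1 - α) * x ^ α := by
        rw [Real.div_rpow hx.le hR.le, show α - 1 = -(1 - α) by ring, Real.rpow_neg hR.le,
          Real.rpow_sub hx, Real.rpow_one]
        field_simp
      rw [e1, Real.mul_rpow (by positivity) (by positivity), ← Real.rpow_mul hx.le,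
        Real.rpow_sub_one hx.ne']
      field_simp
    have hdiv : r / P ≤ 4 * (t / Q) := by
      rw [← mul_div_assoc, div_le_div_iff₀ hP hQ]
      exact hrQ
    rw [hsplit r P hr hP, hsplit t Q ht hQ]
    calc ((r / P) ^ (1 - α)) ^ p * r ^ (α * p - 1) * r * t
        ≤ ((4 * (t / Q)) ^ (1 - α)) ^ p * (2 * t) ^ (α * p - 1) * r * t := by
          have : 0 ≤ α * p - 1 := by linarith
          have : 0 ≤ 1 - α := by linarith
          gcongr
      _ = _ := by
          rw [Real.mul_rpow (by positivity) (by positivity),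
            Real.mul_rpow (by positivity) (by positivity), Real.mul_rpow (by positivity) ht.le]
          ring

/-- An affine function of `‖b - a‖` supporting `b ↦ ‖pw α b - pw α a‖ ^ p` from below, up to a
constant. -/
lemma exists_affine_lower_bound {p α : ℝ} (hp : 1 ≤ p) (hα : 0 < α) (hαp : 1 ≤ α * p) :
    ∃ C : ℝ, 0 < C ∧ ∀ (N : ℕ) (a m b : Vec N),
      ‖pw α m - pw α a‖ ^ p * (‖b - a‖ - ‖m - a‖ / 2)
        ≤ C * (‖m - a‖ * ‖pw α b - pw α a‖ ^ p) := by
  obtain ⟨C, hC, h⟩ := exists_rpow_comparison hp hαp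
  have hp0 : 0 ≤ p := by linarith
  refine ⟨(3 + α) ^ p * C * (3 + α⁻¹) ^ p, by positivity, fun N a m b => ?_⟩
  rcases le_total (‖b - a‖) (‖m - a‖ / 2) with hlt | hge
  · refine (mul_nonpos_of_nonneg_of_nonpos (by positivity) (by linarith)).trans ?_
    positivity
  rcases (norm_nonneg (m - a)).eq_or_lt with h0 | hr
  · have : m = a := sub_eq_zero.1 (norm_eq_zero.1 h0.symm)
    subst this
    simp [Real.zero_rpow (by linarith : p ≠ 0)]
  have hmP : ‖m‖ ≤ max ‖a‖ ‖m‖ := le_max_right _ _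
  have haP : ‖a‖ ≤ max ‖a‖ ‖m‖ := le_max_left _ _
  have hbQ : ‖b‖ ≤ max ‖a‖ ‖b‖ := le_max_right _ _
  have haQ : ‖a‖ ≤ max ‖a‖ ‖b‖ := le_max_left _ _
  have hm1 : ‖m - a‖ ≤ ‖m‖ + ‖a‖ := norm_sub_le _ _
  have hb1 : ‖b - a‖ ≤ ‖b‖ + ‖a‖ := norm_sub_le _ _
  have hm2 : ‖m‖ - ‖a‖ ≤ ‖m - a‖ := norm_sub_norm_le _ _
  have hb2 : ‖b‖ - ‖a‖ ≤ ‖b - a‖ := norm_sub_norm_le _ _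
  have hPQ : max ‖a‖ ‖m‖ ≤ 5 * max ‖a‖ ‖b‖ := by
    have := norm_nonneg a
    exact max_le (by linarith) (by linarith)
  have hQ : max ‖a‖ ‖b‖ ≤ ‖a‖ + ‖b - a‖ := max_le (by linarith) (by linarith)
  have hcmp := h ‖m - a‖ ‖b - a‖ (max ‖a‖ ‖m‖) (max ‖a‖ ‖b‖) hr (by linarith) (by linarith)
    (by linarith) hPQ (by
      calc ‖m - a‖ * max ‖a‖ ‖b‖ ≤ ‖m - a‖ * (‖a‖ + ‖b - a‖) := by gcongr
        _ = ‖m - a‖ * ‖a‖ + ‖m - a‖ * ‖b - a‖ := by ring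
        _ ≤ (2 * ‖b - a‖) * max ‖a‖ ‖m‖ + (2 * max ‖a‖ ‖m‖) * ‖b - a‖ := by
          gcongr <;> linarith
        _ = _ := by ring)
  calc ‖pw α m - pw α a‖ ^ p * (‖b - a‖ - ‖m - a‖ / 2)
      ≤ ((3 + α) * (max ‖a‖ ‖m‖ ^ (α - 1) * ‖m - a‖)) ^ p * ‖b - a‖ := by
        gcongr
        · exact norm_pw_sub_pw_le hα a m
        · linarith
    _ = (3 + α) ^ p * ((max ‖a‖ ‖m‖ ^ (α - 1) * ‖m - a‖) ^ p * ‖b - a‖) := by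
        rw [Real.mul_rpow (by positivity) (by positivity)]; ring
    _ ≤ (3 + α) ^ p * (C * (‖m - a‖ * ((3 + α⁻¹) * ‖pw α b - pw α a‖) ^ p)) := by
        refine mul_le_mul_of_nonneg_left (hcmp.trans ?_) (by positivity)
        have hle := le_norm_pw_sub_pw hα a b
        gcongr C * (‖m - a‖ * ?_ ^ p)
    _ = _ := by
        rw [Real.mul_rpow (by positivity) (by positivity)]; ring

lemma memLp_pw {Ω : Type*} [MeasurableSpace Ω] {μ : Measure Ω} {N : ℕ} {p α : ℝ} (hp : 0 < p)
    (hα : 0 < α) {u : Ω → Vec N} (hu : MemLp u (ENNReal.ofReal (α * p)) μ) :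
    MemLp (fun x => pw α (u x)) (ENNReal.ofReal p) μ := by
  have hmeas : AEStronglyMeasurable (fun x => pw α (u x)) μ :=
    ((hu.1.norm.aemeasurable.pow_const (α - 1)).aestronglyMeasurable).smul hu.1
  have hu_rpow := (integrable_norm_rpow_iff hu.1 (by simp; positivity) (by simp)).2 hu
  refine (integrable_norm_rpow_iff hmeas (by simpa using hp) (by simp)).1 ?_
  rw [ENNReal.toReal_ofReal (by positivity)] at hu_rpow ⊢
  simpa only [norm_pw hα, ← Real.rpow_mul (norm_nonneg _)] using hu_rpow

/-- The estimate for the mean of `u` with respect to an arbitrary probability measure. -/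
lemma exists_norm_pw_integral_sub_le {p α : ℝ} (hp : 1 ≤ p) (hα : 0 < α) (hαp : 1 ≤ α * p) :
    ∃ c : ℝ, 0 < c ∧ ∀ {Ω : Type} [MeasurableSpace Ω] (μ : Measure Ω) [IsProbabilityMeasure μ]
      (N : ℕ) (u : Ω → Vec N) (a : Vec N), MemLp u (ENNReal.ofReal (α * p)) μ →
        ‖pw α (∫ x, u x ∂μ) - pw α a‖ ^ p ≤ c * ∫ x, ‖pw α (u x) - pw α a‖ ^ p ∂μ := by
  obtain ⟨C, hC, h⟩ := exists_affine_lower_bound hp hα hαp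
  have hp0 : 0 < p := by linarith
  refine ⟨2 * C, by positivity, fun {Ω} _ μ _ N u a hu => ?_⟩
  have hui : Integrable u μ := hu.integrable (by simpa using hαp)
  have hG : Integrable (fun x => ‖pw α (u x) - pw α a‖ ^ p) μ := by
    have := ((memLp_pw hp0 hα hu).sub (memLp_const (pw α a))).integrable_norm_rpow
      (by simpa using hp0) (by simp)
    simpa only [ENNReal.toReal_ofReal hp0.le, Pi.sub_apply] using this
  have hsub : Integrable (fun x => ‖u x - a‖) μ := (hui.sub (integrable_const a)).norm
  have hG0 : 0 ≤ ∫ x, ‖pw α (u x) - pw α a‖ ^ p ∂μ := integral_nonneg fun x => by positivity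
  obtain ⟨m, hm⟩ : ∃ m, m = ∫ x, u x ∂μ := ⟨_, rfl⟩
  rw [← hm]
  rcases (norm_nonneg (m - a)).eq_or_lt with h0 | hr
  · rw [sub_eq_zero.1 (norm_eq_zero.1 h0.symm)]
    simp only [sub_self, norm_zero, Real.zero_rpow hp0.ne']
    exact mul_nonneg (by positivity) hG0
  have hmean : ‖m - a‖ ≤ ∫ x, ‖u x - a‖ ∂μ := by
    have : m - a = ∫ x, (u x - a) ∂μ := by
      rw [integral_sub hui (integrable_const a)]; simp [hm]
    rw [this]
    exact norm_integral_le_integral_norm _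
  have hmono : ∫ x, ‖pw α m - pw α a‖ ^ p * (‖u x - a‖ - ‖m - a‖ / 2) ∂μ
      ≤ ∫ x, C * (‖m - a‖ * ‖pw α (u x) - pw α a‖ ^ p) ∂μ :=
    integral_mono ((hsub.sub (integrable_const _)).const_mul _)
      ((hG.const_mul _).const_mul _) fun x => h N a m (u x)
  rw [integral_const_mul, integral_const_mul, integral_const_mul,
    integral_sub hsub (integrable_const _)] at hmono
  simp only [integral_const, probReal_univ, one_smul] at hmono
  have hlow : ‖pw α m - pw α a‖ ^ p * (‖m - a‖ / 2)
      ≤ ‖pw α m - pw α a‖ ^ p * (∫ x, ‖u x - a‖ ∂μ - ‖m - a‖ / 2) := by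
    gcongr
    linarith
  refine le_of_mul_le_mul_right ?_ hr
  linarith

/-- Let `p ≥ 1` and `α ≥ 1/p`. Then there exists `c = c(α, p)` such that for every bounded
domain `A ⊂ ℝ^k` of positive measure, every `u ∈ L^{αp}(A; ℝ^N)` and every `a ∈ ℝ^N`:
`|((u)_A)^⟨α⟩ − a^⟨α⟩|^p ≤ c ⨍_A |u^⟨α⟩ − a^⟨α⟩|^p dx`. -/
theorem mean_pow_bound (p α : ℝ) (hp : 1 ≤ p) (hα : 1 / p ≤ α) :
    ∃ c : ℝ, 0 < c ∧ ∀ (k N : ℕ) (A : Set (EuclideanSpace ℝ (Fin k))),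
      IsOpen A → IsConnected A → Bornology.IsBounded A → 0 < volume A →
      ∀ (u : EuclideanSpace ℝ (Fin k) → Vec N) (a : Vec N),
        MemLp u (ENNReal.ofReal (α * p)) (volume.restrict A) →
        ‖pw α (⨍ y in A, u y) - pw α a‖ ^ p
          ≤ c * ⨍ x in A, ‖pw α (u x) - pw α a‖ ^ p := by
  have hp0 : 0 < p := by linarith
  have hα0 : 0 < α := (by positivity : 0 < 1 / p).trans_le hα
  obtain ⟨c, hc, h⟩ := exists_norm_pw_integral_sub_le hp hα0 ((div_le_iff₀ hp0).1 hα)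
  refine ⟨c, hc, fun k N A _ _ hbdd hpos u a hu => ?_⟩
  have : IsFiniteMeasure (volume.restrict A) := ⟨by simpa using hbdd.measure_lt_top⟩
  have : NeZero (volume.restrict A) := ⟨by simpa using hpos.ne'⟩
  exact h ((volume.restrict A univ)⁻¹ • volume.restrict A) N u a
    (hu.smul_measure (by simpa using hpos.ne'))
end
end

section
/- Sub-intrinsic property of the constructed cylinders: Let max{2n/(n+2),1} < p < 2n/(n−2)_+ and let u, Q_{4R}, λ_o and the scaling factors μ_{z;ρ}^{(λ)} be as in the construction below. Then for every λ ≥ λ_o, every z_o ∈ Q_{2R} and all radii 0 < ρ ≤ s ≤ R one has ⨍⨍_{Q_s^{(μ_{z_o;ρ}^{(λ)})}(z_o)} |u|^p/((μ_{z_o;ρ}^{(λ)})^{2−𝔭} s^p) dx dt ≤ (μ_{z_o;ρ}^{(λ)})^p λ^p. -/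
open MeasureTheory Set
open scoped ENNReal

noncomputable section

abbrev Spc (n : ℕ) := EuclideanSpace ℝ (Fin n)
variable {n N : ℕ}

/-- The scaled parabolic cylinder `Q_ρ^{(μ)}(z₀)`:
`B_ρ(x₀) × (t₀ − μ^{p−2}ρ^p, t₀ + μ^{p−2}ρ^p)` if `p < 2`, and
`B_{μ^{(2−p)/p}ρ}(x₀) × (t₀ − ρ^p, t₀ + ρ^p)` if `p ≥ 2`. -/
def parCyl (p μ ρ : ℝ) (z₀ : Spc n × ℝ) : Set (Spc n × ℝ) :=
  if p < 2 then
    Metric.ball z₀.1 ρ ×ˢ Ioo (z₀.2 - μ ^ (p - 2) * ρ ^ p) (z₀.2 + μ ^ (p - 2) * ρ ^ p)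
  else
    Metric.ball z₀.1 (μ ^ ((2 - p) / p) * ρ) ×ˢ Ioo (z₀.2 - ρ ^ p) (z₀.2 + ρ ^ p)

/-- The exponent `β := 2 − p + (𝔭 − 2)(2 + n/p)`, where `𝔭 = max{p, 2}`. -/
def betaEx (n : ℕ) (p : ℝ) : ℝ := 2 - p + (max p 2 - 2) * (2 + (n : ℝ) / p)

/-- The scaling factor `μ̃_{z;ρ}^{(λ)} := inf{μ ∈ [1, ∞) :
(1/|Q_ρ|) ∬_{Q_ρ^{(μ)}(z)} |u|^p/ρ^p ≤ μ^{p−β} λ^p}`. -/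
def mutilde (p lam : ℝ) (u : Spc n × ℝ → Vec N) (z : Spc n × ℝ) (ρ : ℝ) : ℝ :=
  sInf {μ : ℝ | 1 ≤ μ ∧
    (∫ w in parCyl p μ ρ z, ‖u w‖ ^ p / ρ ^ p) / (volume (parCyl p 1 ρ z)).toReal
      ≤ μ ^ (p - betaEx n p) * lam ^ p}

/-- The monotonized scaling factor `μ_{z;ρ}^{(λ)} := max_{r ∈ [ρ, R]} μ̃_{z;r}^{(λ)}`. -/
def muF (p lam R : ℝ) (u : Spc n × ℝ → Vec N) (z : Spc n × ℝ) (ρ : ℝ) : ℝ :=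
  sSup (mutilde p lam u z '' Icc ρ R)

/-- The exponent `e` with `|Q_ρ^{(μ)}| = μ^e |Q_ρ|`. -/
def volumeExponent (n : ℕ) (p : ℝ) : ℝ := if p < 2 then p - 2 else (2 - p) / p * n

theorem isOpen_parCyl (p μ ρ : ℝ) (z : Spc n × ℝ) : IsOpen (parCyl p μ ρ z) := by
  unfold parCyl
  split_ifs
  · exact Metric.isOpen_ball.prod isOpen_Ioo
  · exact Metric.isOpen_ball.prod isOpen_Ioo

theorem center_mem_parCyl {p μ ρ : ℝ} (hμ : 0 < μ) (hρ : 0 < ρ) (z : Spc n × ℝ) :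
    z ∈ parCyl p μ ρ z := by
  have h1 : 0 < ρ ^ p := Real.rpow_pos_of_pos hρ p
  unfold parCyl
  split_ifs
  · have h2 : 0 < μ ^ (p - 2) * ρ ^ p := by positivity
    exact ⟨Metric.mem_ball_self hρ, by simp only [mem_Ioo]; constructor <;> linarith⟩
  · exact ⟨Metric.mem_ball_self (by positivity), by simp only [mem_Ioo]; constructor <;> linarith⟩

theorem volume_parCyl_ne_top (p μ ρ : ℝ) (z : Spc n × ℝ) : volume (parCyl p μ ρ z) ≠ ∞ := by
  unfold parCyl
  split_ifs
  · rw [Measure.volume_eq_prod, Measure.prod_prod]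
    exact ENNReal.mul_ne_top measure_ball_lt_top.ne measure_Ioo_lt_top.ne
  · rw [Measure.volume_eq_prod, Measure.prod_prod]
    exact ENNReal.mul_ne_top measure_ball_lt_top.ne measure_Ioo_lt_top.ne

theorem volume_real_parCyl_pos {p μ ρ : ℝ} (hμ : 0 < μ) (hρ : 0 < ρ) (z : Spc n × ℝ) :
    0 < volume.real (parCyl p μ ρ z) :=
  ENNReal.toReal_pos
    ((isOpen_parCyl p μ ρ z).measure_pos volume ⟨z, center_mem_parCyl hμ hρ z⟩).ne'
    (volume_parCyl_ne_top p μ ρ z)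

theorem volume_real_parCyl {p μ ρ : ℝ} (hμ : 0 < μ) (hρ : 0 < ρ) (z : Spc n × ℝ) :
    volume.real (parCyl p μ ρ z)
      = μ ^ volumeExponent n p * volume.real (parCyl p 1 ρ z) := by
  have h1 : 0 < ρ ^ p := Real.rpow_pos_of_pos hρ p
  unfold parCyl volumeExponent
  split_ifs
  · have h2 : 0 < μ ^ (p - 2) := by positivity
    simp only [Measure.volume_eq_prod, measureReal_prod_prod, Real.one_rpow, one_mul]
    simp only [measureReal_def, Real.volume_Ioo]
    rw [ENNReal.toReal_ofReal (by nlinarith), ENNReal.toReal_ofReal (by linarith)]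
    ring
  · have h2 : 0 < μ ^ ((2 - p) / p) := by positivity
    simp only [Measure.volume_eq_prod, measureReal_prod_prod, Real.one_rpow, one_mul]
    have h3 : volume.real (Metric.ball z.1 (μ ^ ((2 - p) / p) * ρ))
        = μ ^ ((2 - p) / p * n) * volume.real (Metric.ball z.1 ρ) := by
      rw [measureReal_def, Measure.addHaar_ball_mul_of_pos _ _ h2, ENNReal.toReal_mul,
        ENNReal.toReal_ofReal (by positivity), finrank_euclideanSpace_fin, measureReal_def,
        Measure.addHaar_ball_center volume z.1, ← Real.rpow_natCast, ← Real.rpow_mul hμ.le]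
    rw [h3]
    ring

theorem parCyl_antitone_scale {p μ ν ρ : ℝ} (hμ : 0 < μ) (hμν : μ ≤ ν) (hρ : 0 < ρ)
    (z : Spc n × ℝ) : parCyl p ν ρ z ⊆ parCyl p μ ρ z := by
  have h1 : 0 < ρ ^ p := Real.rpow_pos_of_pos hρ p
  unfold parCyl
  split_ifs with h
  · have h2 : ν ^ (p - 2) * ρ ^ p ≤ μ ^ (p - 2) * ρ ^ p :=
      mul_le_mul_of_nonneg_right (Real.rpow_le_rpow_of_nonpos hμ hμν (by linarith)) h1.le
    exact prod_mono le_rfl (Ioo_subset_Ioo (by linarith) (by linarith))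
  · have h2 : ν ^ ((2 - p) / p) ≤ μ ^ ((2 - p) / p) :=
      Real.rpow_le_rpow_of_nonpos hμ hμν
        (div_nonpos_of_nonpos_of_nonneg (by linarith) (by linarith))
    exact prod_mono (Metric.ball_subset_ball (mul_le_mul_of_nonneg_right h2 hρ.le)) le_rfl

theorem parCyl_one (p ρ : ℝ) (z : Spc n × ℝ) :
    parCyl p 1 ρ z = Metric.ball z.1 ρ ×ˢ Ioo (z.2 - ρ ^ p) (z.2 + ρ ^ p) := by
  simp [parCyl]

theorem parCyl_one_mono {p ρ r : ℝ} (hp : 0 < p) (hρ : 0 < ρ) (h : ρ ≤ r)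
    (z : Spc n × ℝ) : parCyl p 1 ρ z ⊆ parCyl p 1 r z := by
  have h1 : ρ ^ p ≤ r ^ p := Real.rpow_le_rpow hρ.le h hp.le
  simp only [parCyl_one]
  exact prod_mono (Metric.ball_subset_ball h) (Ioo_subset_Ioo (by linarith) (by linarith))

theorem parCyl_one_subset_of_mem {p r R : ℝ} (hp : 1 ≤ p) (hr : 0 < r) (hrR : r ≤ R)
    {z zhat : Spc n × ℝ} (hz : z ∈ parCyl p 1 (2 * R) zhat) :
    parCyl p 1 r z ⊆ parCyl p 1 (4 * R) zhat := by
  have hR : 0 < R := hr.trans_le hrR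
  have h1 : r ^ p ≤ (2 * R) ^ p := Real.rpow_le_rpow hr.le (by linarith) (by linarith)
  have h2 : (2 * R) ^ p + (2 * R) ^ p ≤ (4 * R) ^ p := by
    have h3 : (2 : ℝ) ≤ 2 ^ p := by
      simpa using Real.rpow_le_rpow_of_exponent_le (one_le_two (α := ℝ)) hp
    have h4 : 0 < (2 * R) ^ p := by positivity
    rw [show 4 * R = 2 * (2 * R) by ring, Real.mul_rpow (y := 2 * R) (by norm_num) (by linarith)]
    nlinarith
  rw [parCyl_one] at hz
  simp only [parCyl_one]
  obtain ⟨hx, ht⟩ := hz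
  rw [Metric.mem_ball] at hx
  rw [mem_Ioo] at ht
  exact prod_mono (Metric.ball_subset_ball' (by linarith))
    (Ioo_subset_Ioo (by linarith) (by linarith))

/-- Membership in an open cylinder is stable under small changes of the scaling factor. -/
theorem eventually_mem_parCyl {p μ ρ : ℝ} (hμ : 0 < μ) {z w : Spc n × ℝ}
    (hw : w ∈ parCyl p μ ρ z) : ∀ᶠ ν in nhds μ, w ∈ parCyl p ν ρ z := by
  have hcont (e : ℝ) : ContinuousAt (fun ν : ℝ => ν ^ e) μ :=
    Real.continuousAt_rpow_const _ _ (Or.inl hμ.ne')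
  unfold parCyl at hw ⊢
  split_ifs at hw ⊢ with h
  · have hc := (hcont (p - 2)).mul_const (ρ ^ p)
    simp only [mem_prod, mem_Ioo] at hw ⊢
    obtain ⟨h1, h2, h3⟩ := hw
    filter_upwards [(continuousAt_const.sub hc).eventually_lt_const h2,
      (continuousAt_const.add hc).eventually_const_lt h3] with ν h4 h5
    exact ⟨h1, h4, h5⟩
  · simp only [mem_prod, Metric.mem_ball] at hw ⊢
    filter_upwards [((hcont ((2 - p) / p)).mul_const ρ).eventually_const_lt hw.1] with ν h4
    exact ⟨h4, hw.2⟩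

theorem sub_betaEx_pos {p : ℝ} (hp : 1 < p)
    (hp' : (n : ℝ) ≤ 2 ∨ p < 2 * (n : ℝ) / ((n : ℝ) - 2)) : 0 < p - betaEx n p := by
  unfold betaEx
  rcases lt_or_ge p 2 with h | h
  · rw [max_eq_right h.le]
    linarith
  · rw [max_eq_left h]
    have h0 : (0 : ℝ) ≤ n := n.cast_nonneg
    have h1 : p * ((n : ℝ) - 2) < 2 * n ∨ (n : ℝ) = 0 := by
      by_cases hn : (n : ℝ) ≤ 2
      · rcases h0.eq_or_lt with h2 | h2
        · exact Or.inr h2.symm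
        · left
          nlinarith
      · have h2 := hp'.resolve_left hn
        rw [lt_div_iff₀ (by linarith)] at h2
        left
        linarith
    have h3 : p - (2 - p + (p - 2) * (2 + (n : ℝ) / p)) = (2 * n - p * ((n : ℝ) - 2)) / p := by
      field_simp
      ring
    rw [h3]
    refine div_pos ?_ (by linarith)
    rcases h1 with h1 | h1
    · linarith
    · rw [h1]
      linarith

theorem scaling_exponent_identity (n : ℕ) {p : ℝ} :
    p - betaEx n p + (max p 2 - 2) - volumeExponent n p = p := by
  unfold betaEx volumeExponent
  split_ifs with h
  · rw [max_eq_right h.le]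
    ring
  · rw [max_eq_left (not_lt.mp h)]
    ring

/-- The defining inequality of `mutilde` holds at every scaling factor which is at least the
infimum. -/
theorem le_of_mutilde_le {p lam r ν : ℝ} {u : Spc n × ℝ → Vec N} {z : Spc n × ℝ}
    (hβ : 0 < p - betaEx n p) (hlam : 0 ≤ lam) (hr : 0 < r)
    (hint : IntegrableOn (fun w => ‖u w‖ ^ p) (parCyl p 1 r z))
    (hne : ∃ μ : ℝ, 1 ≤ μ ∧
      (∫ w in parCyl p μ r z, ‖u w‖ ^ p / r ^ p) / (volume (parCyl p 1 r z)).toReal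
        ≤ μ ^ (p - betaEx n p) * lam ^ p)
    (hν1 : 1 ≤ ν) (hν : mutilde p lam u z r ≤ ν) :
    (∫ w in parCyl p ν r z, ‖u w‖ ^ p / r ^ p) / (volume (parCyl p 1 r z)).toReal
      ≤ ν ^ (p - betaEx n p) * lam ^ p := by
  have hint' (μ : ℝ) (hμ : 1 ≤ μ) :
      IntegrableOn (fun w => ‖u w‖ ^ p / r ^ p) (parCyl p μ r z) :=
    IntegrableOn.mono_set (hint.div_const _) (parCyl_antitone_scale one_pos hμ hr z)
  have hnn (w : Spc n × ℝ) : 0 ≤ ‖u w‖ ^ p / r ^ p := by positivity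
  have hgt (ν' : ℝ) (h : ν < ν') :
      (∫ w in parCyl p ν' r z, ‖u w‖ ^ p / r ^ p) / (volume (parCyl p 1 r z)).toReal
        ≤ ν' ^ (p - betaEx n p) * lam ^ p := by
    obtain ⟨μ, ⟨hμ1, hμ⟩, hlt⟩ := exists_lt_of_csInf_lt hne (hν.trans_lt h)
    calc _ ≤ (∫ w in parCyl p μ r z, ‖u w‖ ^ p / r ^ p) / (volume (parCyl p 1 r z)).toReal := by
          refine div_le_div_of_nonneg_right ?_ ENNReal.toReal_nonneg
          exact setIntegral_mono_set (hint' μ hμ1) (Filter.Eventually.of_forall hnn)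
            (parCyl_antitone_scale (by linarith) hlt.le hr z).eventuallyLE
      _ ≤ μ ^ (p - betaEx n p) * lam ^ p := hμ
      _ ≤ _ := mul_le_mul_of_nonneg_right
          (Real.rpow_le_rpow (by linarith) hlt.le hβ.le) (by positivity)
  obtain ⟨a, ha_anti, ha_gt, ha_lim⟩ := exists_seq_strictAnti_tendsto ν
  have hmono : Monotone fun k => parCyl p (a k) r z := fun i j hij =>
    parCyl_antitone_scale (by linarith [ha_gt j]) (ha_anti.antitone hij) hr z
  have hunion : ⋃ k, parCyl p (a k) r z = parCyl p ν r z := by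
    refine subset_antisymm (iUnion_subset fun k =>
      parCyl_antitone_scale (by linarith) (ha_gt k).le hr z) fun w hw => ?_
    obtain ⟨k, hk⟩ := (ha_lim.eventually (eventually_mem_parCyl (by linarith) hw)).exists
    exact mem_iUnion.mpr ⟨k, hk⟩
  have hlim := tendsto_setIntegral_of_monotone
    (fun k => (isOpen_parCyl p (a k) r z).measurableSet) hmono (by
      rw [hunion]
      exact hint' ν hν1)
  rw [hunion] at hlim
  have hrpow : Filter.Tendsto (fun k => a k ^ (p - betaEx n p) * lam ^ p) Filter.atTop
      (nhds (ν ^ (p - betaEx n p) * lam ^ p)) :=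
    (ha_lim.rpow_const (Or.inr hβ.le)).mul_const _
  exact le_of_tendsto_of_tendsto' (hlim.div_const _) hrpow fun k => hgt _ (ha_gt k)

/-- A single scaling factor is admissible for all radii in `[ρ, R]`. -/
theorem exists_admissible_scale {p lam ρ R : ℝ} {u : Spc n × ℝ → Vec N} {z : Spc n × ℝ}
    (hp : 0 < p) (hβ : 0 < p - betaEx n p) (hlam : 1 ≤ lam) (hρ : 0 < ρ)
    (hint : IntegrableOn (fun w => ‖u w‖ ^ p) (parCyl p 1 R z)) :
    ∃ μ : ℝ, 1 ≤ μ ∧ ∀ r ∈ Icc ρ R,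
      (∫ w in parCyl p μ r z, ‖u w‖ ^ p / r ^ p) / (volume (parCyl p 1 r z)).toReal
        ≤ μ ^ (p - betaEx n p) * lam ^ p := by
  set J := ∫ w in parCyl p 1 R z, ‖u w‖ ^ p
  set B := J / ρ ^ p / volume.real (parCyl p 1 ρ z)
  have hvol := volume_real_parCyl_pos (p := p) one_pos hρ z
  have hnn (w : Spc n × ℝ) : 0 ≤ ‖u w‖ ^ p := by positivity
  have hJ : 0 ≤ J := integral_nonneg hnn
  have hρp : 0 < ρ ^ p := by positivity
  have hB : 0 ≤ B := by positivity
  set μ := max 1 (B ^ (1 / (p - betaEx n p)))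
  have hμ1 : 1 ≤ μ := le_max_left _ _
  refine ⟨μ, hμ1, fun r hr => ?_⟩
  have hr0 : 0 < r := hρ.trans_le hr.1
  have hBμ : B ≤ μ ^ (p - betaEx n p) := by
    calc B = (B ^ (1 / (p - betaEx n p))) ^ (p - betaEx n p) := by
          rw [← Real.rpow_mul hB, one_div_mul_cancel hβ.ne', Real.rpow_one]
      _ ≤ _ := Real.rpow_le_rpow (by positivity) (le_max_right _ _) hβ.le
  calc _ = (∫ w in parCyl p μ r z, ‖u w‖ ^ p) / r ^ p / volume.real (parCyl p 1 r z) := by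
        rw [integral_div, measureReal_def]
    _ ≤ B := by
        refine div_le_div₀ (by positivity) (div_le_div₀ hJ ?_ hρp
          (Real.rpow_le_rpow hρ.le hr.1 hp.le)) hvol
          (measureReal_mono (parCyl_one_mono hp hρ hr.1 z) (volume_parCyl_ne_top p 1 r z))
        exact setIntegral_mono_set hint (Filter.Eventually.of_forall hnn)
          ((parCyl_antitone_scale one_pos hμ1 hr0 z).trans
            (parCyl_one_mono hp hr0 hr.2 z)).eventuallyLE
    _ ≤ μ ^ (p - betaEx n p) := hBμ
    _ ≤ _ := le_mul_of_one_le_right (by positivity) (Real.one_le_rpow hlam hp.le)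

/-- Sub-intrinsic property of the constructed cylinders: let
`max{2n/(n+2), 1} < p < 2n/(n−2)₊`. Then for every `λ ≥ λ₀`, every `z₀ ∈ Q_{2R}` and all
radii `0 < ρ ≤ s ≤ R`:
`⨍⨍_{Q_s^{(μ_{z₀;ρ}^{(λ)})}(z₀)} |u|^p/((μ_{z₀;ρ}^{(λ)})^{2−𝔭} s^p) ≤ (μ_{z₀;ρ}^{(λ)})^p λ^p`. -/
theorem subintrinsic_of_construction (n : ℕ) (p : ℝ) (hn : 1 ≤ n)
    (hp : max (2 * (n : ℝ) / ((n : ℝ) + 2)) 1 < p)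
    (hp' : (n : ℝ) ≤ 2 ∨ p < 2 * (n : ℝ) / ((n : ℝ) - 2)) :
    ∀ (N : ℕ) (T R : ℝ) (Ω : Set (Spc n)) (u : Spc n × ℝ → Vec N)
      (zhat : Spc n × ℝ) (lam₀ lam : ℝ),
      0 < T → IsOpen Ω → Bornology.IsBounded Ω → 0 < R →
      parCyl p 1 (4 * R) zhat ⊆ Ω ×ˢ Ioo 0 T →
      Measurable u →
      MemLp u (ENNReal.ofReal p) (volume.restrict (Ω ×ˢ Ioo 0 T)) →
      1 + (⨍ w in parCyl p 1 (4 * R) zhat, ‖u w‖ ^ p / (4 * R) ^ p) ^ (1 / p) ≤ lam₀ →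
      lam₀ ≤ lam →
      ∀ z₀ ∈ parCyl p 1 (2 * R) zhat, ∀ ρ s : ℝ, 0 < ρ → ρ ≤ s → s ≤ R →
        ⨍ w in parCyl p (muF p lam R u z₀ ρ) s z₀,
            ‖u w‖ ^ p / ((muF p lam R u z₀ ρ) ^ (2 - max p 2) * s ^ p)
          ≤ (muF p lam R u z₀ ρ) ^ p * lam ^ p := by
  intro N T R Ω u zhat lam₀ lam _ _ _ hR hsub _ hu hlam₀ hlam z₀ hz₀ ρ s hρ hρs hsR
  have hp1 : 1 < p := (le_max_right _ _).trans_lt hp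
  have hp0 : 0 < p := one_pos.trans hp1
  have hβ := sub_betaEx_pos hp1 hp'
  have hs : 0 < s := hρ.trans_le hρs
  have hlam1 : 1 ≤ lam := by
    have h : 0 ≤ ⨍ w in parCyl p 1 (4 * R) zhat, ‖u w‖ ^ p / (4 * R) ^ p := by
      rw [setAverage_eq, smul_eq_mul]
      exact mul_nonneg (by positivity) (integral_nonneg fun w => by positivity)
    linarith [Real.rpow_nonneg h (1 / p)]
  have hintR : IntegrableOn (fun w => ‖u w‖ ^ p) (parCyl p 1 R z₀) := by
    have h := hu.integrable_norm_rpow (by simpa using hp0) ENNReal.ofReal_ne_top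
    rw [ENNReal.toReal_ofReal hp0.le] at h
    exact IntegrableOn.mono_set h
      ((parCyl_one_subset_of_mem hp1.le hR le_rfl hz₀).trans hsub)
  obtain ⟨M, hM1, hM⟩ := exists_admissible_scale hp0 hβ hlam1 hρ hintR
  have hbdd : BddAbove (mutilde p lam u z₀ '' Icc ρ R) := by
    refine ⟨M, ?_⟩
    rintro _ ⟨r, hr, rfl⟩
    exact csInf_le ⟨1, fun _ h => h.1⟩ ⟨hM1, hM r hr⟩
  have hle : mutilde p lam u z₀ s ≤ muF p lam R u z₀ ρ :=
    le_csSup hbdd ⟨s, ⟨hρs, hsR⟩, rfl⟩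
  have hμ1 : 1 ≤ muF p lam R u z₀ ρ := by
    refine le_trans ?_ hle
    exact le_csInf ⟨M, hM1, hM s ⟨hρs, hsR⟩⟩ fun _ h => h.1
  generalize muF p lam R u z₀ ρ = μ at hle hμ1 ⊢
  have hμ0 : 0 < μ := one_pos.trans_le hμ1
  have key := le_of_mutilde_le hβ (by linarith) hs
    (hintR.mono_set (parCyl_one_mono hp0 hs hsR z₀)) ⟨M, hM1, hM s ⟨hρs, hsR⟩⟩ hμ1 hle
  calc _ = ((∫ w in parCyl p μ s z₀, ‖u w‖ ^ p / s ^ p) / (volume (parCyl p 1 s z₀)).toReal)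
        * (μ ^ (max p 2 - 2) / μ ^ volumeExponent n p) := by
        rw [setAverage_eq, smul_eq_mul, volume_real_parCyl hμ0 hs, integral_div, integral_div,
          measureReal_def, show 2 - max p 2 = -(max p 2 - 2) by ring, Real.rpow_neg hμ0.le]
        field_simp
    _ ≤ (μ ^ (p - betaEx n p) * lam ^ p) * (μ ^ (max p 2 - 2) / μ ^ volumeExponent n p) :=
        mul_le_mul_of_nonneg_right key (by positivity)
    _ = μ ^ (p - betaEx n p + (max p 2 - 2) - volumeExponent n p) * lam ^ p := by
        rw [Real.rpow_sub hμ0 _ (volumeExponent n p), Real.rpow_add hμ0]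
        ring
    _ = μ ^ p * lam ^ p := by rw [scaling_exponent_identity]
end
end
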